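/- arXiv:1408.0235 — 2 statements merged into one kernel-verified Lean document; each statement's English description precedes it below -/
import Mathlib

section
/- Let a be an integer that is not a perfect square. Then there exists a constant C such that for every real s > 1, |∑_p χ_p(a)·p^{-s}| ≤ C, where the sum runs over all odd primes p (this sum converges absolutely for every real s > 1). -/
lemma aux_exists_jacobi (d : ℤ) (hd : Squarefree d.natAbs) (h1 : d ≠ 1) :
    ∃ n : ℕ, Odd n ∧ jacobiSym d n = -1 := by
  have hd0 : d.natAbs ≠ 0 := hd.ne_zero
  by_cases h : ∃ p : ℕ, p.Prime ∧ p ≠ 2 ∧ p ∣ d.natAbs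
  · obtain ⟨p, hp, hp2, hpd⟩ := h
    have : Fact p.Prime := ⟨hp⟩
    obtain ⟨e, he⟩ := Int.natCast_dvd.mpr hpd
    have hpe : ¬ p ∣ e.natAbs := by
      rintro ⟨f, hf⟩
      have : p * p ∣ d.natAbs := by
        rw [he, Int.natAbs_mul, Int.natAbs_natCast, hf]
        exact ⟨f, by ring⟩
      exact hp.one_lt.ne' (Nat.isUnit_iff.mp (hd p this))
    have hcop : Nat.Coprime p (4 * e.natAbs) := by
      rw [Nat.Prime.coprime_iff_not_dvd hp, hp.dvd_mul]
      rintro (h | h)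
      · have : p ∣ 2 ^ 2 := by simpa using h
        exact hp2 ((Nat.prime_dvd_prime_iff_eq hp Nat.prime_two).mp (hp.dvd_of_dvd_pow this))
      · exact hpe h
    obtain ⟨r, hr⟩ := quadraticChar_exists_neg_one (F := ZMod p)
      (by rw [ZMod.ringChar_zmod_n]; exact hp2)
    obtain ⟨n, hn1, hn2⟩ := Nat.chineseRemainder hcop r.val 1
    have h4 : n % 4 = 1 := by
      have := hn2.of_dvd (Dvd.intro e.natAbs (rfl : 4 * e.natAbs = _))
      simpa [Nat.ModEq] using this
    have hodd : Odd n := Nat.odd_iff.mpr (by omega)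
    refine ⟨n, hodd, ?_⟩
    rw [he, jacobiSym.mul_left, jacobiSym.mod_right e hodd, hn2, ← jacobiSym.mod_right e odd_one,
      jacobiSym.one_right, mul_one,
      jacobiSym.quadratic_reciprocity_one_mod_four' (hp.odd_of_ne_two hp2) h4,
      ← jacobiSym.legendreSym.to_jacobiSym, legendreSym]
    have : ((n : ℤ) : ZMod p) = r := by
      have := (ZMod.natCast_eq_natCast_iff _ _ _).mpr hn1
      simpa using this
    rw [this, hr]
  · push Not at h
    have h2 := Nat.eq_prime_pow_of_unique_prime_dvd hd0
      (p := 2) (fun {q} hq hqd => by by_contra hne; exact h q hq hne hqd)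
    set k := d.natAbs.primeFactorsList.length
    have hk : k ≤ 1 := by
      by_contra hk
      have : 2 * 2 ∣ d.natAbs := by
        rw [h2]; exact pow_dvd_pow 2 (show 2 ≤ k by omega)
      have := Nat.isUnit_iff.mp (hd 2 this)
      omega
    have : d = -1 ∨ d = 2 ∨ d = -2 := by
      interval_cases k <;> omega
    rcases this with rfl | rfl | rfl
    · exact ⟨3, by decide, by norm_num⟩
    · exact ⟨3, by decide, by norm_num⟩
    · exact ⟨5, by decide, by norm_num⟩

lemma aux_exists_jacobi' (a : ℤ) (ha : ¬ IsSquare a) :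
    ∃ n : ℕ, Odd n ∧ jacobiSym a n = -1 := by
  have ha0 : a ≠ 0 := by rintro rfl; exact ha ⟨0, rfl⟩
  obtain ⟨m, s, hms, hm⟩ := Nat.sq_mul_squarefree a.natAbs
  obtain ⟨d, hd, had⟩ : ∃ d : ℤ, d.natAbs = m ∧ a = d * (s : ℤ) ^ 2 := by
    rcases Int.natAbs_eq a with h | h
    · exact ⟨m, by simp, by rw [h, ← hms]; push_cast; ring⟩
    · exact ⟨-m, by simp, by rw [h, ← hms]; push_cast; ring⟩
  have hd1 : d ≠ 1 := by
    rintro rfl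
    exact ha ⟨s, by rw [had]; ring⟩
  have hm0 : m ≠ 0 := hm.ne_zero
  have hs0 : s ≠ 0 := by rintro rfl; simp at had; exact ha0 had
  obtain ⟨n, hn, hj⟩ := aux_exists_jacobi d (hd ▸ hm) hd1
  have : NeZero (4 * d.natAbs) := ⟨by omega⟩
  have : NeZero n := ⟨by rintro rfl; simp at hn⟩
  have hcop : Nat.Coprime n (4 * d.natAbs) := by
    have h1 : Nat.Coprime n 4 := Nat.Coprime.pow_right 2 (Nat.coprime_two_right.mpr hn)
    refine Nat.Coprime.mul_right h1 ?_
    by_contra hc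
    have : jacobiSym d n = 0 := jacobiSym.eq_zero_iff_not_coprime.mpr
      (by rw [Int.gcd, Int.natAbs_natCast]; rwa [Nat.coprime_comm] at hc)
    omega
  obtain ⟨q, hq, hqp, hqe⟩ := Nat.forall_exists_prime_gt_and_eq_mod
    ((ZMod.isUnit_iff_coprime n _).mpr hcop) (s + 2)
  have hqodd : Odd q := hqp.odd_of_ne_two (by omega)
  have : NeZero q := ⟨hqp.ne_zero⟩
  refine ⟨q, hqodd, ?_⟩
  rw [had, jacobiSym.mul_left, jacobiSym.pow_left, jacobiSym.sq_one, mul_one,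
    jacobiSym.mod_right d hqodd, (ZMod.natCast_eq_natCast_iff _ _ _).mp hqe,
    ← jacobiSym.mod_right d hn, hj]
  rw [Int.gcd, Int.natAbs_natCast, Int.natAbs_natCast]
  exact (Nat.coprime_of_lt_prime hs0 (by omega) hqp).symm

lemma aux_exists_char (a : ℤ) (ha : ¬ IsSquare a) :
    ∃ N : ℕ, N ≠ 0 ∧ ∃ χ : DirichletCharacter ℂ N, χ ≠ 1 ∧
      ∀ n : ℕ, χ n = if Odd n then (jacobiSym a n : ℂ) else 0 := by
  have ha0 : a ≠ 0 := by rintro rfl; exact ha ⟨0, rfl⟩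
  set N := 4 * a.natAbs with hN
  have hN0 : N ≠ 0 := by omega
  have : NeZero N := ⟨hN0⟩
  have hodd (n : ℕ) : Odd (n % N) ↔ Odd n := by
    rw [Nat.odd_iff, Nat.odd_iff, Nat.mod_mod_of_dvd _ ⟨2 * a.natAbs, by omega⟩]
  let g : ℕ → ℂ := fun n => if Odd n then (jacobiSym a n : ℂ) else 0
  have hgmod (n : ℕ) : g (n % N) = g n := by
    simp only [g, hodd]
    split_ifs with h
    · rw [jacobiSym.mod_right a h]
    · rfl
  have hgmul (m n : ℕ) : g (m * n) = g m * g n := by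
    simp only [g, Nat.odd_mul]
    by_cases hm : Odd m <;> by_cases hn : Odd n <;> simp only [hm, hn] <;> simp
    have : NeZero m := ⟨by rintro rfl; simp at hm⟩
    have : NeZero n := ⟨by rintro rfl; simp at hn⟩
    rw [jacobiSym.mul_right]; push_cast; rfl
  let χ : DirichletCharacter ℂ N :=
    { toFun := fun x => g x.val
      map_one' := by
        have : (1 : ZMod N).val = 1 % N := by rw [← Nat.cast_one, ZMod.val_natCast]
        rw [this, hgmod]
        simp [g]
      map_mul' := fun x y => by
        rw [ZMod.val_mul, hgmod, hgmul]
      map_nonunit' := fun x hx => by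
        rw [← ZMod.natCast_zmod_val x, ZMod.isUnit_iff_coprime] at hx
        simp only [g]
        split_ifs with ho
        · have : NeZero x.val := ⟨by intro h; simp [h] at ho⟩
          rw [jacobiSym.eq_zero_iff_not_coprime.mpr]; · simp
          intro hc
          rw [Int.gcd, Int.natAbs_natCast] at hc
          apply hx
          exact Nat.Coprime.mul_right (Nat.Coprime.pow_right 2 (Nat.coprime_two_right.mpr ho))
            (Nat.Coprime.symm hc)
        · rfl }
  have hχ (n : ℕ) : χ n = g n := by
    change g (n : ZMod N).val = _
    rw [ZMod.val_natCast, hgmod]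
  refine ⟨N, hN0, χ, ?_, hχ⟩
  obtain ⟨n, hn, hj⟩ := aux_exists_jacobi' a ha
  intro h
  have h1 := hχ n
  simp only [g, hn, hj, if_true] at h1
  rw [h] at h1
  by_cases hu : IsUnit (n : ZMod N)
  · rw [MulChar.one_apply hu] at h1; norm_num at h1
  · rw [MulChar.map_nonunit _ hu] at h1; norm_num at h1

lemma aux_analytic {N : ℕ} (hN : N ≠ 0) (χ : DirichletCharacter ℂ N) (hχ : χ ≠ 1) :
    ∃ C : ℝ, ∀ s : ℝ, 1 < s →
      ‖(∑' p : Nat.Primes, χ p * (p : ℂ) ^ (-(s : ℂ))).re‖ ≤ C := by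
  have : NeZero N := ⟨hN⟩
  have hnorm (s : ℝ) (p : Nat.Primes) :
      ‖χ p * (p : ℂ) ^ (-(s : ℂ))‖ ≤ (p : ℝ) ^ (-s) := by
    rw [norm_mul, Complex.norm_natCast_cpow_of_pos p.2.pos]
    simpa using mul_le_of_le_one_left (by positivity) (χ.norm_le_one _)
  have hsum (s : ℝ) (hs : 1 < s) : Summable fun p : Nat.Primes => (p : ℝ) ^ (-s) :=
    Nat.Primes.summable_rpow.mpr (by linarith)
  have hS (s : ℝ) (hs : 1 < s) : Summable fun p : Nat.Primes => χ p * (p : ℂ) ^ (-(s : ℂ)) :=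
    Summable.of_norm_bounded (hsum s hs) (hnorm s)
  set K := ∑' p : Nat.Primes, (p : ℝ) ^ (-(2 : ℝ)) with hK
  -- log of the norm of the L-function is bounded on [1,2]
  have hcont : ContinuousOn (fun s : ℝ => Real.log ‖χ.LFunction s‖) (Set.Icc 1 2) := by
    refine ContinuousOn.log ?_ ?_
    · exact (((DirichletCharacter.differentiable_LFunction hχ).continuous.comp
        Complex.continuous_ofReal).norm).continuousOn
    · intro s hs
      exact norm_ne_zero_iff.mpr (DirichletCharacter.LFunction_ne_zero_of_one_le_re χ (.inl hχ)
        (by simpa using hs.1))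
  obtain ⟨B, hB⟩ := isCompact_Icc.exists_bound_of_continuousOn hcont
  refine ⟨max (B + K) K, fun s hs => ?_⟩
  rcases le_or_gt s 2 with h2 | h2
  · refine le_trans ?_ (le_max_left _ _)
    have hre : 1 < (s : ℂ).re := by simpa using hs
    have hE := DirichletCharacter.LSeries_eulerProduct_exp_log χ hre
    rw [← DirichletCharacter.LFunction_eq_LSeries χ hre] at hE
    set T := ∑' p : Nat.Primes, -Complex.log (1 - χ p * (p : ℂ) ^ (-(s : ℂ))) with hT
    have hTs : Summable fun p : Nat.Primes => -Complex.log (1 - χ p * (p : ℂ) ^ (-(s : ℂ))) :=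
      DirichletCharacter.summable_neg_log_one_sub_mul_prime_cpow χ hre
    have hTre : |T.re| ≤ B := by
      have := hB s ⟨hs.le, h2⟩
      rwa [← hE, Complex.norm_exp, Real.log_exp] at this
    have hdiff : ‖T - ∑' p : Nat.Primes, χ p * (p : ℂ) ^ (-(s : ℂ))‖ ≤ K := by
      rw [hT, ← hTs.tsum_sub (hS s hs)]
      refine tsum_of_norm_bounded (hsum 2 (by norm_num)).hasSum fun p => ?_
      set z := χ p * (p : ℂ) ^ (-(s : ℂ)) with hz
      have hp2 : (2 : ℝ) ≤ (p : ℝ) := by exact_mod_cast p.2.two_le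
      have hz1 : ‖z‖ ≤ (p : ℝ)⁻¹ := by
        refine (hnorm s p).trans ?_
        rw [← Real.rpow_neg_one]
        exact Real.rpow_le_rpow_of_exponent_le (by linarith) (by linarith)
      have hz2 : ‖z‖ ≤ 1 / 2 := hz1.trans (by
        rw [one_div]; exact inv_anti₀ (by norm_num) hp2)
      have h3 := Complex.norm_log_one_add_sub_self_le (z := -z) (by rw [norm_neg]; linarith)
      rw [norm_neg] at h3
      have h4 : -Complex.log (1 - z) - z = -(Complex.log (1 + -z) - -z) := by
        rw [← sub_eq_add_neg]; ring
      rw [h4, norm_neg]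
      refine h3.trans ?_
      have h5 : (1 - ‖z‖)⁻¹ ≤ 2 := by
        rw [inv_le_comm₀ (by linarith) (by norm_num)]; linarith
      have h6 : ‖z‖ ^ 2 ≤ (p : ℝ) ^ (-(2 : ℝ)) := by
        rw [Real.rpow_neg (by positivity), Real.rpow_two, ← inv_pow]
        gcongr
      nlinarith [sq_nonneg ‖z‖]
    have h7 := (Complex.abs_re_le_norm _).trans hdiff
    rw [Complex.sub_re] at h7
    rw [Real.norm_eq_abs]
    rw [abs_le] at *
    constructor <;> linarith [hTre.1, hTre.2, h7.1, h7.2]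
  · refine le_trans ?_ (le_max_right _ _)
    refine (Complex.abs_re_le_norm _).trans ?_
    refine tsum_of_norm_bounded (hsum 2 (by norm_num)).hasSum fun p => (hnorm s p).trans ?_
    exact Real.rpow_le_rpow_of_exponent_le (by exact_mod_cast p.2.one_lt.le) (by linarith)

/-- Lemma 5.12: if `a` is an integer that is not a perfect square, then the sums
`∑_p χ_p(a) p^{-s}` over the odd primes `p` (which converge absolutely for every real `s > 1`)
remain bounded for `s > 1`. -/
theorem bounded_sum_legendreSym_mul_rpow (a : ℤ) (ha : ¬ IsSquare a) :
    ∃ C : ℝ, ∀ s : ℝ, 1 < s →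
      Summable (fun p : {p : ℕ // p.Prime ∧ p ≠ 2} =>
        |((@legendreSym p.1 ⟨p.2.1⟩ a : ℤ) : ℝ) * (p.1 : ℝ) ^ (-s)|) ∧
      |∑' p : {p : ℕ // p.Prime ∧ p ≠ 2},
          ((@legendreSym p.1 ⟨p.2.1⟩ a : ℤ) : ℝ) * (p.1 : ℝ) ^ (-s)| ≤ C := by
  obtain ⟨N, hN, χ, hχ, hχn⟩ := aux_exists_char a ha
  obtain ⟨C, hC⟩ := aux_analytic hN χ hχ
  refine ⟨C, fun s hs => ?_⟩
  let i : {p : ℕ // p.Prime ∧ p ≠ 2} → Nat.Primes := fun p => ⟨p.1, p.2.1⟩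
  have hi : Function.Injective i := fun p q h => Subtype.ext (congrArg (fun x : Nat.Primes => x.1) h)
  have hval (p : {p : ℕ // p.Prime ∧ p ≠ 2}) :
      χ (i p).1 * ((i p).1 : ℂ) ^ (-(s : ℂ)) =
        ((((@legendreSym p.1 ⟨p.2.1⟩ a : ℤ) : ℝ) * (p.1 : ℝ) ^ (-s) : ℝ) : ℂ) := by
    have : Fact p.1.Prime := ⟨p.2.1⟩
    rw [hχn, if_pos (p.2.1.odd_of_ne_two p.2.2), jacobiSym.legendreSym.to_jacobiSym,
      Complex.ofReal_mul, Complex.ofReal_cpow (by positivity)]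
    simp [i]
  have hsummable : Summable fun p : Nat.Primes => (p : ℝ) ^ (-s) :=
    Nat.Primes.summable_rpow.mpr (by linarith)
  constructor
  · refine Summable.of_nonneg_of_le (fun _ => abs_nonneg _) (fun p => ?_)
      (hsummable.comp_injective hi)
    rw [← Real.norm_eq_abs, ← Complex.norm_real, ← hval, norm_mul,
      Complex.norm_natCast_cpow_of_pos (i p).2.pos]
    simpa using mul_le_of_le_one_left (by positivity) (χ.norm_le_one _)
  · have h1 := hC s hs
    have h2 : Function.support (fun p : Nat.Primes => χ p.1 * (p.1 : ℂ) ^ (-(s : ℂ))) ⊆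
        Set.range i := by
      intro p hp
      by_cases hp2 : p.1 = 2
      · exfalso
        apply hp
        have : χ p.1 = 0 := by rw [hχn, hp2]; simp [show ¬ Odd 2 by decide]
        change χ p.1 * _ = 0
        rw [this, zero_mul]
      · exact ⟨⟨p.1, p.2, hp2⟩, rfl⟩
    rw [← hi.tsum_eq h2] at h1
    simp_rw [hval] at h1
    rw [← Complex.ofReal_tsum, Complex.ofReal_re] at h1
    exact h1
end

section
/- Let p be an odd prime. (i) If p ≡ 3 (mod 4), then ∑_{0<n<p/2} χ_p(n) > 0. (ii) If p ≡ 1 (mod 4), then ∑_{0<n<p/4} χ_p(n) > 0. (iii) If p > 3, then ∑_{0<n<p/3} χ_p(n) > 0. (Each sum runs over all integers n in the indicated open interval.) -/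
open Filter Topology Complex

lemma csqrt_mul (t : ℝ) (ht : 0 < t) (w : ℂ) (hw : 0 < w.re) :
    ((t:ℂ)^2 * w) ^ (1/2 : ℂ) = t * w ^ (1/2:ℂ) := by
  have hw0 : w ≠ 0 := by rintro rfl; simp at hw
  have h1 : (w ^ (1/2:ℂ))^2 = w := by
    rw [← Complex.cpow_nat_mul]; norm_num
  have h2 : 0 < (w ^ (1/2:ℂ)).re := by
    rw [Complex.cpow_def_of_ne_zero hw0, Complex.exp_re]
    have : (Complex.log w * (1/2)).im = w.arg / 2 := by
      simp [Complex.mul_im, Complex.log_im]; ring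
    rw [this]
    have := Complex.abs_arg_lt_pi_div_two_iff.2 (Or.inl hw)
    rw [abs_lt] at this
    have := Real.cos_pos_of_mem_Ioo (x := w.arg/2) ⟨by linarith [Real.pi_pos], by linarith [Real.pi_pos]⟩
    positivity
  have := Complex.sq_cpow_two_inv (x := t * w ^ (1/2:ℂ)) (by rw [Complex.re_ofReal_mul]; positivity)
  rw [mul_pow, h1] at this
  rw [← this]; norm_num

lemma theta_tendsto (W : ℝ → ℂ) (hW : Tendsto (fun t => (W t).re) atTop atTop) (θ : ℝ) :
    Tendsto (fun t => ∑' n : ℤ, cexp (-Real.pi * W t * n^2 + 2 * Real.pi * (-I * θ) * n)) atTop (𝓝 1) := by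
  have hnorm : ∀ t (n : ℤ), ‖cexp (-Real.pi * W t * n^2 + 2 * Real.pi * (-I * θ) * n)‖ =
      Real.exp (-Real.pi * (W t).re * n^2) := by
    intro t n
    rw [Complex.norm_exp]
    congr 1
    have : -Real.pi * W t * (n:ℂ)^2 + 2 * Real.pi * (-I * θ) * n =
      ((-Real.pi * n^2 : ℝ) : ℂ) * W t + ((-(2 * Real.pi * θ * n) : ℝ):ℂ) * I := by
      push_cast; ring
    rw [this, Complex.add_re, Complex.re_ofReal_mul, Complex.re_ofReal_mul]
    simp; ring
  have hs : Summable (fun n : ℤ => Real.exp (-Real.pi * 1 * (n:ℝ)^2)) := by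
    have := summable_pow_mul_jacobiTheta₂_term_bound 0 (T := 1) one_pos 0
    refine this.congr ?_
    intro n; simp
  have key := tendsto_tsum_of_dominated_convergence (𝓕 := atTop)
    (f := fun t (n:ℤ) => cexp (-Real.pi * W t * n^2 + 2 * Real.pi * (-I * θ) * n))
    (g := fun n : ℤ => if n = 0 then (1:ℂ) else 0) hs ?_ ?_
  · simpa using key
  · intro n
    by_cases hn : n = 0
    · subst hn; simp
    · simp only [hn, if_false]
      rw [tendsto_zero_iff_norm_tendsto_zero]
      simp only [hnorm]
      apply Real.tendsto_exp_atBot.comp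
      have : (0:ℝ) < Real.pi * n^2 := by positivity
      have h2 := (hW.const_mul_atTop this)
      rw [← tendsto_neg_atBot_iff] at h2
      refine h2.congr ?_
      intro t; ring
  · filter_upwards [hW.eventually_ge_atTop 1] with t ht n
    rw [hnorm]
    apply Real.exp_le_exp.2
    have : (0:ℝ) ≤ Real.pi * n^2 := by positivity
    nlinarith

lemma theta_periodic (N : ℕ) (hN : 0 < N) (c : ℤ → ℂ) (hc : ∀ m r : ℤ, c (m * N + r) = c r)
    (hb : ∀ n, ‖c n‖ ≤ 1) (W : ℂ) (hW : 0 < W.re) :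
    ∑' n : ℤ, c n * cexp (-Real.pi / W * n^2) = W ^ (1/2:ℂ) * ((1 / N) * ∑ r : Fin N, c (r:ℕ) *
      ∑' n : ℤ, cexp (-Real.pi * (((1/N:ℝ):ℂ)^2 * W) * n^2 + 2 * Real.pi * (-I * ((r:ℕ)/N:ℝ)) * n)) := by
  have : NeZero N := ⟨hN.ne'⟩
  have hW0 : W ≠ 0 := by rintro rfl; simp at hW
  have hre : 0 < (1/W).re := by
    rw [one_div, Complex.inv_re]; exact div_pos hW (Complex.normSq_pos.2 hW0)
  have hsum : Summable (fun n : ℤ => c n * cexp (-Real.pi / W * n^2)) := by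
    have := summable_pow_mul_jacobiTheta₂_term_bound 0 (T := (1/W).re) hre 0
    refine Summable.of_norm_bounded this ?_
    intro n
    rw [norm_mul, Complex.norm_exp]
    have e : (-Real.pi / W * (n:ℂ)^2) = ((-Real.pi * n^2 : ℝ) : ℂ) * (1/W) := by push_cast; ring
    rw [e, Complex.re_ofReal_mul]
    have e2 : (-Real.pi * n^2 : ℝ) * (1/W).re = -Real.pi * ((1/W).re * (n:ℝ)^2 - 2 * 0 * |(n:ℝ)|) := by ring
    rw [e2]
    simpa using mul_le_mul_of_nonneg_right (hb n) (Real.exp_nonneg _)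
  have hs2 := ((Equiv.prodComm _ _).trans (Int.divModEquiv N).symm).summable_iff.2 hsum
  have hs3 := hs2.tsum_prod
  simp only [Function.comp_def] at hs3
  rw [← ((Equiv.prodComm _ _).trans (Int.divModEquiv N).symm).tsum_eq, hs3, tsum_fintype,
    Finset.mul_sum, Finset.mul_sum]
  refine Finset.sum_congr rfl fun r _ => ?_
  have hpos : (0:ℝ) < 1 / N := by positivity
  have hwre : 0 < (((1/N:ℝ):ℂ)^2 * W).re := by
    rw [← Complex.ofReal_pow, Complex.re_ofReal_mul]; positivity
  rw [Complex.tsum_exp_neg_quadratic hwre, csqrt_mul _ hpos _ hW]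
  have hN' : (N:ℂ) ≠ 0 := by exact_mod_cast hN.ne'
  have hWs : W ^ (1/2:ℂ) ≠ 0 := by simp [Complex.cpow_eq_zero_iff, hW0]
  have : ∀ X : ℂ, W ^ (1/2:ℂ) * ((1 / N) * (c (r:ℕ) * (1 / (((1/N:ℝ):ℂ) * W ^ (1/2:ℂ)) * X))) = c (r:ℕ) * X := by
    intro X
    push_cast
    field_simp
  rw [this, ← tsum_mul_left]
  refine tsum_congr fun m => ?_
  have e : ((Equiv.prodComm _ _).trans (Int.divModEquiv N).symm) (r, m) = m * N + (r:ℕ) := by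
    simp [Int.divModEquiv]
  rw [e, hc]
  congr 2
  push_cast
  rw [show I * (-I * ((r:ℕ) / (N:ℂ))) = (r:ℕ) / (N:ℂ) by linear_combination (-(((r:ℕ):ℂ) / (N:ℂ))) * I_mul_I]
  field_simp

lemma theta_periodic_tendsto (N : ℕ) (hN : 0 < N) (c : ℤ → ℂ)
    (W : ℝ → ℂ) (hW : Tendsto (fun t => (W t).re) atTop atTop) :
    Tendsto (fun t => (1 / (N:ℂ)) * ∑ r : Fin N, c (r:ℕ) *
      ∑' n : ℤ, cexp (-Real.pi * (((1/N:ℝ):ℂ)^2 * W t) * n^2 + 2 * Real.pi * (-I * ((r:ℕ)/N:ℝ)) * n))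
      atTop (𝓝 ((1 / (N:ℂ)) * ∑ r : Fin N, c (r:ℕ))) := by
  apply Tendsto.const_mul
  apply tendsto_finsetSum
  intro r _
  rw [show 𝓝 (c (r:ℕ)) = 𝓝 (c (r:ℕ) * 1) by rw [mul_one]]
  apply Tendsto.const_mul
  apply theta_tendsto
  have : (0:ℝ) < (1/N)^2 := by positivity
  refine (hW.const_mul_atTop this).congr ?_
  intro t
  rw [← Complex.ofReal_pow, Complex.re_ofReal_mul]

/-- Gauss sum evaluation. -/
lemma gauss_eval (p : ℕ) (hp : 0 < p) :
    ∑ r : Fin p, cexp (2 * Real.pi * I * ((r:ℕ):ℂ)^2 / p) =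
      Real.sqrt p * ((1 + (-I)^p) / (1 - I)) := by
  have hp' : (p:ℂ) ≠ 0 := by exact_mod_cast hp.ne'
  have hpR : (0:ℝ) < p := by exact_mod_cast hp
  set c1 : ℤ → ℂ := fun n => cexp (2 * Real.pi * I * (n:ℂ)^2 / p) with hc1
  set c2 : ℤ → ℂ := fun n => cexp (-(Real.pi * I * p * (n:ℂ)^2 / 2)) with hc2
  have hc1p : ∀ m r : ℤ, c1 (m * p + r) = c1 r := by
    intro m r
    simp only [hc1]
    rw [Complex.exp_eq_exp_iff_exists_int]
    refine ⟨m^2 * p + 2 * m * r, ?_⟩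
    push_cast
    field_simp
    ring
  have hc2p : ∀ m r : ℤ, c2 (m * (2:ℕ) + r) = c2 r := by
    intro m r
    simp only [hc2]
    rw [Complex.exp_eq_exp_iff_exists_int]
    refine ⟨-(m^2 * p + m * r * p), ?_⟩
    push_cast
    field_simp
    ring
  have hb1 : ∀ n, ‖c1 n‖ ≤ 1 := by
    intro n
    have : 2 * Real.pi * I * (n:ℂ)^2 / p = ((2 * Real.pi * n^2/p : ℝ) : ℂ) * I := by push_cast; ring
    simp only [hc1]
    rw [this, Complex.norm_exp_ofReal_mul_I]
  have hb2 : ∀ n, ‖c2 n‖ ≤ 1 := by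
    intro n
    have : -(Real.pi * I * p * (n:ℂ)^2 / 2) = ((-(Real.pi * p * n^2/2) : ℝ) : ℂ) * I := by push_cast; ring
    simp only [hc2]
    rw [this, Complex.norm_exp_ofReal_mul_I]
  set V : ℝ → ℂ := fun t => 4 / p^2 + ((2 / (p * t^2) : ℝ) : ℂ) * I with hV
  set a : ℝ → ℂ := fun t => ((1 / t^2 : ℝ) : ℂ) + ((-(2/p) : ℝ):ℂ) * I with ha
  have hVre : ∀ t, (V t).re = 4 / p^2 := by
    intro t
    have : V t = ((4/p^2 : ℝ) : ℂ) + ((2 / (p * t^2) : ℝ) : ℂ) * I := by simp [hV]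
    rw [this]
    rw [Complex.add_re, Complex.re_ofReal_mul, Complex.ofReal_re]; simp
  have hare : ∀ t, (a t).re = 1/t^2 := by
    intro t
    simp only [ha]
    rw [Complex.add_re, Complex.re_ofReal_mul, Complex.ofReal_re]; simp
  have hW1re : ∀ t : ℝ, ((t:ℂ)^2 * 1).re = t^2 := by
    intro t; rw [mul_one, ← Complex.ofReal_pow, Complex.ofReal_re]
  have hW2re : ∀ t : ℝ, ((t:ℂ)^2 * V t).re = t^2 * (4/p^2) := by
    intro t; rw [← Complex.ofReal_pow, Complex.re_ofReal_mul, hVre]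
  have hsq : Tendsto (fun t : ℝ => t^2) atTop atTop := tendsto_pow_atTop two_ne_zero
  have T1 := theta_periodic_tendsto p hp c1 (fun t => (t:ℂ)^2 * 1) (by simpa only [hW1re] using hsq)
  have T2 := theta_periodic_tendsto 2 two_pos c2 (fun t => (t:ℂ)^2 * V t)
    (by simp only [hW2re]; exact hsq.atTop_mul_const (by positivity))
  have hinv : Tendsto (fun t : ℝ => 1/t^2) atTop (𝓝 0) := by
    refine hsq.inv_tendsto_atTop.congr ?_
    intro t; simp
  have la : Tendsto (fun t => (a t)^(1/2:ℂ)) atTop (𝓝 ((((-(2/p) : ℝ):ℂ) * I)^(1/2:ℂ))) := by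
    refine (_root_.continuousAt_cpow_const (b := (1/2:ℂ)) ?_).tendsto.comp ?_
    swap
    · have := ((Complex.continuous_ofReal.tendsto 0).comp hinv).add_const (((-(2/p) : ℝ):ℂ) * I)
      simpa [ha] using this
    · right
      rw [Complex.im_ofReal_mul]
      simp [hp.ne']
  have lV : Tendsto (fun t => (V t)^(1/2:ℂ)) atTop (𝓝 ((((4/p^2 : ℝ):ℂ))^(1/2:ℂ))) := by
    refine (_root_.continuousAt_cpow_const (b := (1/2:ℂ)) ?_).tendsto.comp ?_
    swap
    · have h1 := (hinv.const_mul ((2:ℝ)/p))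
      have := (((Complex.continuous_ofReal.tendsto _).comp h1).mul_const I).const_add (((4/p^2 : ℝ):ℂ))
      simp only [mul_zero, ofReal_zero, zero_mul, add_zero] at this
      refine this.congr ?_
      intro t
      simp only [hV, Function.comp]
      push_cast
      congr 2
      ring
    · left
      rw [Complex.ofReal_re]; positivity
  have va : (((-(2/p) : ℝ):ℂ) * I)^(1/2:ℂ) = (1 - I) / Real.sqrt p := by
    have hs : (0:ℝ) < Real.sqrt p := Real.sqrt_pos.2 hpR
    have hss : ((Real.sqrt p : ℝ):ℂ)^2 = p := by
      rw [← Complex.ofReal_pow, Real.sq_sqrt hpR.le]; simp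
    have := Complex.sq_cpow_two_inv (x := ((1/Real.sqrt p : ℝ):ℂ) * (1 - I)) (by
      rw [Complex.re_ofReal_mul]; simp; exact hp)
    rw [mul_pow] at this
    rw [show (1 - I) / (Real.sqrt p:ℂ) = ((1/Real.sqrt p : ℝ):ℂ) * (1 - I) by push_cast; ring, ← this]
    rw [show (1/2:ℂ) = 2⁻¹ by norm_num]
    congr 1
    push_cast
    rw [div_pow, hss]
    field_simp
    linear_combination (-1:ℂ) * I_sq
  have vV : (((4/p^2 : ℝ):ℂ))^(1/2:ℂ) = 2 / p := by
    have := Complex.sq_cpow_two_inv (x := ((2/p : ℝ):ℂ)) (by rw [Complex.ofReal_re]; positivity)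
    rw [show (2:ℂ)/p = ((2/p : ℝ):ℂ) by push_cast; ring, ← this, show (1/2:ℂ) = 2⁻¹ by norm_num]
    congr 1
    push_cast; ring
  rw [va] at la
  rw [vV] at lV
  have L := la.mul T1
  have R := lV.mul T2
  have hLR := tendsto_nhds_unique_of_eventuallyEq L R ?_
  · have hf2 : ∑ r : Fin 2, c2 ((r:ℕ):ℤ) = 1 + (-I)^p := by
      rw [Fin.sum_univ_two]
      simp only [hc2]
      have : cexp (-(Real.pi * I * p * ((((1:Fin 2):ℕ):ℤ):ℂ)^2 / 2)) = (-I)^p := by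
        rw [show (-I : ℂ) = cexp (-(Real.pi/2) * I) by rw [neg_mul, Complex.exp_neg, Complex.exp_pi_div_two_mul_I]; simp, ← Complex.exp_nat_mul]
        congr 1
        simp; ring
      rw [this]; simp
    rw [hf2] at hLR
    have hI : (1 - I : ℂ) ≠ 0 := by
      intro h; have := congrArg Complex.re h; simp at this
    have hs : ((Real.sqrt p:ℝ):ℂ) ≠ 0 := by
      exact_mod_cast (Real.sqrt_pos.2 hpR).ne'
    have hf1 : ∑ r : Fin p, c1 ((r:ℕ):ℤ) = ∑ r : Fin p, cexp (2 * Real.pi * I * ((r:ℕ):ℂ)^2 / p) := by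
      simp [hc1]
    rw [hf1] at hLR
    field_simp at hLR ⊢
    push_cast at hLR
    linear_combination (1/2) * hLR 
  · filter_upwards [eventually_gt_atTop 0] with t ht
    have e1 := theta_periodic p hp c1 hc1p hb1 ((t:ℂ)^2 * 1) (by rw [hW1re]; positivity)
    have e2 := theta_periodic 2 two_pos c2 hc2p hb2 ((t:ℂ)^2 * V t) (by rw [hW2re]; positivity)
    have e3 := Complex.tsum_exp_neg_mul_int_sq (a := a t) (by rw [hare]; positivity)
    have ht' : (t:ℂ) ≠ 0 := by exact_mod_cast ht.ne'
    have hat0 : a t ≠ 0 := by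
      intro h; have := hare t; rw [h, Complex.zero_re] at this; have : 0 < 1/t^2 := by positivity
      linarith
    have hV0 : V t ≠ 0 := by
      intro h; have := hVre t; rw [h, Complex.zero_re] at this; have : (0:ℝ) < 4/p^2 := by positivity
      linarith
    have hVa : V t = 2 * I / p * a t := by
      simp only [hV, ha]; push_cast; field_simp; linear_combination (4 * t^2) * I_sq
    have hainv : 1 / a t = I * p / 2 + 1 / ((t:ℂ)^2 * V t) := by
      rw [hVa]
      have h : a t * (t:ℂ)^2 = 1 - 2 * I / p * t^2 := by
        simp only [ha]; push_cast; field_simp; ring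
      have hII : I ≠ 0 := I_ne_zero
      rw [show 1 / ((t:ℂ)^2 * (2 * I / p * a t)) = - I * p / (2 * t^2 * a t) by
        field_simp; linear_combination I_sq]
      field_simp
      have h2 : a t * (t:ℂ)^2 * p = p - 2 * I * t^2 := by rw [h]; field_simp
      linear_combination (-I) * h2 + 2 * (t:ℂ)^2 * I_sq
    have f1 : ∑' n : ℤ, c1 n * cexp (-Real.pi / ((t:ℂ)^2 * 1) * n^2) = ∑' n : ℤ, cexp (-Real.pi * a t * (n : ℂ) ^ 2) := by
      refine tsum_congr fun n => ?_
      simp only [hc1, ha]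
      rw [← Complex.exp_add]
      congr 1
      push_cast; field_simp; ring
    have f2 : ∑' n : ℤ, c2 n * cexp (-Real.pi / ((t:ℂ)^2 * V t) * n^2) = ∑' n : ℤ, cexp (-Real.pi / a t * (n : ℂ) ^ 2) := by
      refine tsum_congr fun n => ?_
      simp only [hc2]
      rw [← Complex.exp_add]
      congr 1
      linear_combination (Real.pi * (n:ℂ)^2) * hainv
    rw [f1, csqrt_mul _ ht _ (by simp)] at e1
    rw [f2, csqrt_mul _ ht _ (by rw [hVre]; positivity)] at e2
    rw [e1, e2] at e3
    have hA : (a t)^(1/2:ℂ) ≠ 0 := by simp [Complex.cpow_eq_zero_iff, hat0]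
    simp only [Complex.one_cpow, mul_one] at e3
    simp only [mul_one]
    generalize (1 / (p:ℂ)) * _ = X at e3 ⊢
    generalize (1 / ((2:ℕ):ℂ)) * _ = Y at e3 ⊢
    field_simp at e3
    linear_combination e3

lemma conv_nonneg (ω : ℕ → ℝ) (h0 : ω 0 = 0) (h1 : ω 1 = 1) (hmul : ∀ m n, ω (m * n) = ω m * ω n)
    (hval : ∀ n, ω n = 0 ∨ ω n = 1 ∨ ω n = -1) :
    (∀ n : ℕ, 0 ≤ ∑ d ∈ n.divisors, ω d) ∧ ∀ k, 1 ≤ ∑ d ∈ (4^k).divisors, ω d := by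
  have hpow : ∀ n k, ω (n^k) = ω n ^ k := by
    intro n k
    induction k with
    | zero => simpa using h1
    | succ k ih => rw [pow_succ, hmul, ih, pow_succ]
  have hge : ∀ p k : ℕ, p.Prime → 0 ≤ ∑ d ∈ (p^k).divisors, ω d := by
    intro p k hp
    rw [Nat.sum_divisors_prime_pow hp]
    simp only [hpow]
    rcases hval p with h | h | h
    · rw [h]; exact Finset.sum_nonneg fun i _ => by positivity
    · rw [h]; exact Finset.sum_nonneg fun i _ => by positivity
    · rw [h, neg_one_geom_sum]; split_ifs <;> norm_num
  set W : ArithmeticFunction ℝ := ⟨ω, h0⟩ with hW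
  have hWm : W.IsMultiplicative := ⟨h1, fun {m n} _ => hmul m n⟩
  have hc := (ArithmeticFunction.isMultiplicative_zeta.natCast (R := ℝ)).mul hWm
  have hcv : ∀ n, ((ArithmeticFunction.zeta : ArithmeticFunction ℕ) * W : ArithmeticFunction ℝ) n = ∑ d ∈ n.divisors, ω d := by
    intro n
    rw [ArithmeticFunction.coe_zeta_mul_apply]; rfl
  constructor
  · intro n
    rcases eq_or_ne n 0 with rfl | hn
    · simp
    · rw [← hcv, hc.multiplicative_factorization _ hn]
      apply Finset.prod_nonneg
      intro p hp
      simp only [hcv]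
      exact hge p _ (Nat.prime_of_mem_primeFactors hp)
  · intro k
    rw [show 4^k = 2^(2*k) by rw [pow_mul]; norm_num, Nat.sum_divisors_prime_pow Nat.prime_two]
    simp only [hpow]
    rcases hval 2 with h | h | h
    · rw [h, Finset.sum_range_succ']; simp
    · rw [h]; simp
    · rw [h, neg_one_geom_sum]; simp

lemma lambert (ω : ℕ → ℝ) (h0 : ω 0 = 0) (h1 : ω 1 = 1) (hmul : ∀ m n, ω (m * n) = ω m * ω n)
    (hval : ∀ n, ω n = 0 ∨ ω n = 1 ∨ ω n = -1) (t : ℝ) (ht0 : 0 < t) (ht1 : t < 1) :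
    Summable (fun n : ℕ => ω (n+1) * (t^(n+1) / (1 - t^(n+1)))) ∧
    ∀ K, ∑ k ∈ Finset.range K, t^(4^k) ≤ ∑' n : ℕ, ω (n+1) * (t^(n+1) / (1 - t^(n+1))) := by
  have habs : ∀ n, |ω n| ≤ 1 := by
    intro n; rcases hval n with h | h | h <;> rw [h] <;> norm_num
  have hlt : ∀ n : ℕ, t^(n+1) ≤ t := fun n => by
    have := pow_le_pow_of_le_one ht0.le ht1.le (Nat.le_add_left 1 n); simpa using this
  have hnt : ‖t‖ < 1 := by rw [Real.norm_eq_abs, abs_of_pos ht0]; exact ht1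
  constructor
  · refine Summable.of_norm_bounded (g := fun n => t^n * (t/(1-t))) ((summable_geometric_of_lt_one ht0.le ht1).mul_right _) ?_
    intro n
    have h1' := hlt n
    have hpos : 0 < t^(n+1) := by positivity
    rw [norm_mul, Real.norm_eq_abs, Real.norm_eq_abs, abs_of_nonneg (a := _ / _) (div_nonneg hpos.le (by linarith))]
    calc _ ≤ 1 * (t^(n+1) / (1 - t^(n+1))) := by
          apply mul_le_mul_of_nonneg_right (habs _)
          exact div_nonneg hpos.le (by linarith)
      _ ≤ t^(n+1)/(1-t) := by
          rw [one_mul]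
          apply div_le_div_of_nonneg_left hpos.le (by linarith) (by linarith)
      _ = _ := by rw [pow_succ]; ring
  · intro K
    set F : ℕ+ × ℕ+ → ℝ := fun c => ω c.1 * t^(c.1 * c.2 : ℕ) with hF
    have hFs : Summable F := by
      refine Summable.of_norm_bounded (summable_prod_mul_pow 0 hnt).norm ?_
      intro c
      simp only [hF, pow_zero, one_mul]
      rw [norm_mul]
      exact mul_le_of_le_one_left (norm_nonneg _) (habs _)
    have e1 : ∑' c, F c = ∑' n : ℕ, ω (n+1) * (t^(n+1) / (1 - t^(n+1))) := by
      rw [hFs.tsum_prod, ← tsum_pnat_eq_tsum_succ (f := fun n => ω n * (t^n / (1 - t^n)))]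
      refine tsum_congr fun a => ?_
      simp only [hF]
      rw [tsum_mul_left]
      congr 1
      have := tsum_pnat_eq_tsum_succ (f := fun m => t^((a:ℕ) * m))
      rw [this]
      have hta : t^(a:ℕ) < 1 := pow_lt_one₀ ht0.le ht1 a.pos.ne'
      have hg := tsum_geometric_of_lt_one (r := t^(a:ℕ)) (by positivity) hta
      rw [div_eq_mul_inv, ← hg, ← tsum_mul_left]
      refine tsum_congr fun m => ?_
      rw [← pow_mul, ← pow_add]; ring
    have hs2 := sigmaAntidiagonalEquivProd.summable_iff.2 hFs
    have hs3 := hs2.sigma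
    have e2 : ∀ n : ℕ+, ∑' x : Nat.divisorsAntidiagonal n, (F ∘ sigmaAntidiagonalEquivProd) ⟨n, x⟩ =
        (∑ d ∈ (n:ℕ).divisors, ω d) * t^(n:ℕ) := by
      intro n
      rw [tsum_fintype, Finset.sum_mul]
      have : ∀ x : Nat.divisorsAntidiagonal n, (F ∘ sigmaAntidiagonalEquivProd) ⟨n, x⟩ = ω x.1.1 * t^(n:ℕ) := by
        intro x
        have := (Nat.mem_divisorsAntidiagonal.1 x.2).1
        simp only [hF, Function.comp, sigmaAntidiagonalEquivProd, divisorsAntidiagonalFactors, PNat.mk_coe, Equiv.coe_fn_mk]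
        rw [this]
      simp only [this]
      rw [Finset.univ_eq_attach, Finset.sum_attach (n:ℕ).divisorsAntidiagonal (fun x : ℕ × ℕ => ω x.1 * t^(n:ℕ)),
        Nat.sum_divisorsAntidiagonal (fun x _ => ω x * t^(n:ℕ))]
    obtain ⟨hc0, hc4⟩ := conv_nonneg ω h0 h1 hmul hval
    have hcomp := hs2.tsum_sigma
    have heq := sigmaAntidiagonalEquivProd.tsum_eq F
    simp only [e2] at hs3 hcomp
    rw [← e1, ← heq]
    change _ ≤ ∑' c, (F ∘ sigmaAntidiagonalEquivProd) c
    rw [hcomp]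
    let g : ℕ → ℕ+ := fun k => ⟨4^k, by positivity⟩
    have ginj : Function.Injective g := by
      intro a b hab
      have : 4^a = 4^b := congrArg PNat.val hab
      exact Nat.pow_right_injective (by norm_num) this
    calc ∑ k ∈ Finset.range K, t^(4^k) ≤ ∑ k ∈ Finset.range K, (∑ d ∈ (g k:ℕ).divisors, ω d) * t^(g k:ℕ) := by
          apply Finset.sum_le_sum
          intro k _
          exact le_mul_of_one_le_left (by positivity) (hc4 k)
      _ = ∑ n ∈ (Finset.range K).map ⟨g, ginj⟩, (∑ d ∈ (n:ℕ).divisors, ω d) * t^(n:ℕ) := by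
          rw [Finset.sum_map]; rfl
      _ ≤ _ := by
          apply hs3.sum_le_tsum
          intro n _
          exact mul_nonneg (hc0 _) (by positivity)

lemma geom_ge (s : ℝ) (n : ℕ) : (n+1) * s^n ≤ ∑ i ∈ Finset.range (n+1), (s^2)^i := by
  induction n using Nat.twoStepInduction with
  | zero => simp
  | one => simp [Finset.sum_range_succ]; nlinarith [sq_nonneg (s-1)]
  | more n ih _ =>
    rw [Finset.sum_range_succ, Finset.sum_range_succ']
    have e : ∑ k ∈ Finset.range (n + 1), (s^2)^(k+1) = s^2 * ∑ k ∈ Finset.range (n+1), (s^2)^k := by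
      rw [Finset.mul_sum]; exact Finset.sum_congr rfl fun i _ => by ring
    rw [e]
    have := mul_le_mul_of_nonneg_left ih (sq_nonneg s)
    have h2 := sq_nonneg (s^(n+2) - 1)
    have h3 : (s^2)^(n+1+1) = (s^(n+2))^2 := by ring
    rw [h3]
    push_cast
    have h4 : s^2 * ((n+1) * s^n) = (n+1) * s^(n+2) := by ring
    nlinarith

lemma b_anti (t : ℝ) (ht0 : 0 < t) (ht1 : t < 1) :
    Antitone (fun n : ℕ => 1 / ((n+1:ℝ) * (1 - t)) - t^(n+1) / (1 - t^(n+1))) := by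
  apply antitone_nat_of_succ_le
  intro n
  obtain ⟨s, hs, rfl⟩ : ∃ s : ℝ, 0 < s ∧ s^2 = t := ⟨Real.sqrt t, Real.sqrt_pos.2 ht0, Real.sq_sqrt ht0.le⟩
  set t := s^2
  have hs1 : s < 1 := by nlinarith
  have g1 := geom_ge s n
  have g2 := geom_ge s (n+1)
  have q1 := mul_neg_geom_sum t (n+1)
  have q2 := mul_neg_geom_sum t (n+1+1)
  set A := ∑ i ∈ Finset.range (n+1), t^i
  set B := ∑ i ∈ Finset.range (n+1+1), t^i
  have hA : 0 < A := lt_of_lt_of_le (by positivity) g1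
  have hB : 0 < B := lt_of_lt_of_le (by positivity) g2
  have h1t : 0 < 1 - t := by linarith
  rw [← q1, ← q2]
  push_cast at g2 ⊢
  have hBA : B = 1 + t * A := by
    simp only [A, B]
    rw [Finset.sum_range_succ', Finset.mul_sum, add_comm]
    congr 1
    exact Finset.sum_congr rfl fun i _ => by ring
  have hdiff : t^(n+1) / ((1-t)*A) - t^(n+1+1)/((1-t)*B) = t^(n+1) / (A * B) / (1 - t) := by
    rw [div_sub_div _ _ (by positivity) (by positivity), div_div, div_eq_div_iff (by positivity) (by positivity)]
    rw [hBA]; ring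
  have hd2 : 1 / ((n+1:ℝ)*(1-t)) - 1 / ((n+1+1:ℝ)*(1-t)) = 1 / ((n+1)*(n+1+1)) / (1-t) := by
    field_simp; ring
  have hle : t^(n+1) / (A * B) / (1 - t) ≤ 1 / ((n+1)*(n+1+1)) / (1-t) := by
    apply div_le_div_of_nonneg_right _ h1t.le
    rw [div_le_div_iff₀ (by positivity) (by positivity), one_mul]
    have hAB := mul_le_mul g1 g2 (by positivity) hA.le
    refine le_trans ?_ hAB
    have e1 : t^(n+1) = s * (s^n * s^(n+1)) := by simp only [t]; ring
    rw [e1]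
    have : s * (s^n * s^(n+1)) ≤ s^n * s^(n+1) := mul_le_of_le_one_left (by positivity) hs1.le
    nlinarith [mul_le_mul_of_nonneg_right this (show (0:ℝ) ≤ (n+1)*(n+1+1) by positivity)]
  linarith

lemma abel_bound (w b : ℕ → ℝ) (C : ℝ) (hC : ∀ N, |∑ i ∈ Finset.range N, w i| ≤ C)
    (hb : Antitone b) (hb0 : ∀ n, 0 ≤ b n) (N : ℕ) : |∑ i ∈ Finset.range N, w i * b i| ≤ C * b 0 := by
  have hC0 : 0 ≤ C := le_trans (abs_nonneg _) (hC 0)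
  have key : ∀ N, |∑ i ∈ Finset.range N, w i * b i - (∑ i ∈ Finset.range N, w i) * b N| ≤ C * (b 0 - b N) := by
    intro N
    induction N with
    | zero => simp
    | succ N ih =>
      have h1 := hb (Nat.le_succ N)
      simp only [Nat.succ_eq_add_one] at h1
      have e : ∑ i ∈ Finset.range (N+1), w i * b i - (∑ i ∈ Finset.range (N+1), w i) * b (N+1) =
        (∑ i ∈ Finset.range N, w i * b i - (∑ i ∈ Finset.range N, w i) * b N) +
        (∑ i ∈ Finset.range (N+1), w i) * (b N - b (N+1)) := by
        rw [Finset.sum_range_succ, Finset.sum_range_succ]; ring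
      rw [e]
      refine (abs_add_le _ _).trans ?_
      rw [abs_mul, abs_of_nonneg (a := b N - b (N+1)) (by linarith)]
      have := mul_le_mul_of_nonneg_right (hC (N+1)) (show 0 ≤ b N - b (N+1) by linarith)
      linarith
  have h := key N
  have h2 : |(∑ i ∈ Finset.range N, w i) * b N| ≤ C * b N := by
    rw [abs_mul, abs_of_nonneg (hb0 N)]
    exact mul_le_mul_of_nonneg_right (hC N) (hb0 N)
  have := abs_add_le (∑ i ∈ Finset.range N, w i * b i - (∑ i ∈ Finset.range N, w i) * b N) ((∑ i ∈ Finset.range N, w i) * b N)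
  rw [sub_add_cancel] at this
  linarith

lemma L_pos (ω : ℕ → ℝ) (h0 : ω 0 = 0) (h1 : ω 1 = 1) (hmul : ∀ m n, ω (m * n) = ω m * ω n)
    (hval : ∀ n, ω n = 0 ∨ ω n = 1 ∨ ω n = -1) (C : ℝ) (hC : ∀ N, |∑ i ∈ Finset.range N, ω (i+1)| ≤ C) :
    ∃ L : ℝ, 0 < L ∧ Tendsto (fun N => ∑ i ∈ Finset.range N, ω (i+1) / ((i:ℝ)+1)) atTop (𝓝 L) := by
  have hanti : Antitone (fun n : ℕ => 1 / ((n:ℝ)+1)) := by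
    intro a b hab
    apply one_div_le_one_div_of_le (by positivity)
    have : (a:ℝ) ≤ b := by exact_mod_cast hab
    linarith
  have hcs := hanti.cauchySeq_series_mul_of_tendsto_zero_of_bounded tendsto_one_div_add_atTop_nhds_zero_nat (z := fun i => ω (i+1)) hC
  obtain ⟨L, hL⟩ := cauchySeq_tendsto_of_complete hcs
  have hL' : Tendsto (fun N => ∑ i ∈ Finset.range N, ω (i+1) / ((i:ℝ)+1)) atTop (𝓝 L) := by
    refine hL.congr fun N => Finset.sum_congr rfl fun i _ => ?_
    rw [smul_eq_mul]; ring
  refine ⟨L, ?_, hL'⟩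
  have main : ∀ t : ℝ, 0 < t → t < 1 → ∀ K, ∑ k ∈ Finset.range K, t^(4^k) ≤ L / (1 - t) + C := by
    intro t ht0 ht1 K
    obtain ⟨hs, hK⟩ := lambert ω h0 h1 hmul hval t ht0 ht1
    have ht := hs.hasSum.tendsto_sum_nat
    have h3 := (hL'.div_const (1-t)).sub ht
    set b : ℕ → ℝ := fun n : ℕ => 1 / ((n+1:ℝ) * (1 - t)) - t^(n+1) / (1 - t^(n+1)) with hbdef
    have hb := b_anti t ht0 ht1
    have h1t : 0 < 1 - t := by linarith
    have hblim : Tendsto b atTop (𝓝 0) := by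
      have a1 : Tendsto (fun n : ℕ => 1 / ((n+1:ℝ)) * (1 / (1 - t))) atTop (𝓝 (0 * (1/(1-t)))) :=
        tendsto_one_div_add_atTop_nhds_zero_nat.mul_const _
      have a2 : Tendsto (fun n : ℕ => t^(n+1)) atTop (𝓝 0) :=
        (tendsto_pow_atTop_nhds_zero_of_lt_one ht0.le ht1).comp (tendsto_add_atTop_nat 1)
      have a3 := a1.sub (a2.div (a2.const_sub 1) (by norm_num))
      simp only [zero_mul, zero_div, sub_zero] at a3
      refine a3.congr fun n => ?_
      simp only [hbdef, Pi.div_apply]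
      congr 1
      rw [one_div_mul_one_div]
    have hb0 : ∀ n, 0 ≤ b n := fun n => hb.le_of_tendsto hblim n
    have hbz : b 0 = 1 := by
      simp [hbdef]; field_simp
    have hbd : ∀ N, |(∑ i ∈ Finset.range N, ω (i+1) / ((i:ℝ)+1)) / (1-t) - ∑ i ∈ Finset.range N, ω (i+1) * (t^(i+1) / (1 - t^(i+1)))| ≤ C := by
      intro N
      have := abel_bound (fun i => ω (i+1)) b C hC hb hb0 N
      rw [hbz, mul_one] at this
      convert this using 2
      rw [Finset.sum_div, ← Finset.sum_sub_distrib]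
      refine Finset.sum_congr rfl fun i _ => ?_
      simp only [hbdef]
      rw [mul_sub]
      congr 1
      field_simp
    have h4 := le_of_tendsto h3.abs (Eventually.of_forall hbd)
    have := (abs_le.1 h4).1
    have := hK K
    linarith
  obtain ⟨K, hK⟩ := exists_nat_gt (C + 1)
  have hcont : Tendsto (fun t : ℝ => ∑ k ∈ Finset.range K, t^(4^k)) (𝓝[<] 1) (𝓝 (∑ k ∈ Finset.range K, (1:ℝ)^(4^k))) :=
    ((continuous_finsetSum _ fun k _ => continuous_pow (4^k)).tendsto 1).mono_left nhdsWithin_le_nhds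
  simp only [one_pow, Finset.sum_const, Finset.card_range, nsmul_eq_mul, mul_one] at hcont
  have ev := hcont.eventually (lt_mem_nhds hK)
  have ev2 : ∀ᶠ t : ℝ in 𝓝[<] 1, t ∈ Set.Ioo (0:ℝ) 1 := Ioo_mem_nhdsLT one_pos
  obtain ⟨t, ht, ht0, ht1⟩ := (ev.and ev2).exists
  have := main t ht0 ht1 K
  have h5 : 0 < L / (1 - t) := by linarith
  by_contra hneg
  have := div_nonpos_of_nonpos_of_nonneg (not_lt.1 hneg) (show 0 ≤ 1 - t by linarith)
  linarith
lemma sum_range_zmod {p : ℕ} [NeZero p] (f : ZMod p → ℂ) :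
    ∑ n ∈ Finset.range p, f (n : ZMod p) = ∑ a : ZMod p, f a := by
  refine Finset.sum_nbij' (fun n => (n : ZMod p)) (fun a => a.val) ?_ ?_ ?_ ?_ ?_
  · intro n _; simp
  · intro a _; simp [ZMod.val_lt]
  · intro n hn; exact ZMod.val_cast_of_lt (Finset.mem_range.1 hn)
  · intro a _; simp
  · intro n _; rfl

lemma legendre_gauss (p : ℕ) [Fact p.Prime] (hp2 : p ≠ 2) (m : ℕ) :
    ∑ n ∈ Finset.range p, ((legendreSym p (n:ℤ) : ℤ) : ℂ) * cexp (2 * Real.pi * I * (n * m / p)) =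
      ((legendreSym p (m:ℤ) : ℤ) : ℂ) * (Real.sqrt p * ((1 + (-I)^p) / (1 - I))) := by
  have hp0 : 0 < p := (Fact.out : p.Prime).pos
  have : Fact (1 < p) := ⟨(Fact.out : p.Prime).one_lt⟩
  have hch : ringChar (ZMod p) ≠ 2 := by rwa [ZMod.ringChar_zmod_n]
  rw [← gauss_eval p hp0]
  set ψ : AddChar (ZMod p) ℂ := ZMod.stdAddChar with hψ
  set χ : MulChar (ZMod p) ℂ := (quadraticChar (ZMod p)).ringHomComp (Int.castRingHom ℂ) with hχ
  have hχv : ∀ n : ℕ, χ (n : ZMod p) = ((legendreSym p (n:ℤ) : ℤ) : ℂ) := by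
    intro n
    simp [hχ, legendreSym]
  have hψv : ∀ n : ℕ, ψ (n : ZMod p) = cexp (2 * Real.pi * I * (n:ℂ) / p) := by
    intro n
    have := ZMod.stdAddChar_coe (N := p) (n:ℤ)
    push_cast at this
    exact this
  have hprim : ψ.IsPrimitive := ZMod.isPrimitive_stdAddChar p
  have hψ0 : ∑ a, ψ a = 0 := by
    apply AddChar.sum_eq_zero_of_ne_one
    have := hprim one_ne_zero
    simpa [AddChar.mulShift_one] using this
  have hG : ∑ r : Fin p, cexp (2 * Real.pi * I * ((r:ℕ):ℂ)^2 / p) = gaussSum χ ψ := by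
    rw [Fin.sum_univ_eq_sum_range (fun r : ℕ => cexp (2 * Real.pi * I * (r:ℂ)^2 / p)) p]
    have e1 : ∀ r : ℕ, cexp (2 * Real.pi * I * (r:ℂ)^2 / p) = ψ ((r : ZMod p)^2) := by
      intro r
      have := hψv (r^2)
      push_cast at this
      rw [this]
    simp only [e1]
    rw [sum_range_zmod (fun x => ψ (x^2))]
    have e2 : ∑ x : ZMod p, ψ (x^2) = ∑ a : ZMod p, ∑ x : ZMod p with x^2 = a, ψ (x^2) :=
      (Finset.sum_fiberwise _ _ _).symm
    rw [e2]
    have e3 : ∀ a : ZMod p, ∑ x : ZMod p with x^2 = a, ψ (x^2) = χ a * ψ a + ψ a := by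
      intro a
      have := quadraticChar_card_sqrts hch a
      rw [Finset.sum_congr rfl (g := fun _ => ψ a) (by intro x hx; rw [(Finset.mem_filter.1 hx).2])]
      rw [Finset.sum_const, nsmul_eq_mul]
      have h2 : (((Finset.univ.filter (fun x : ZMod p => x^2 = a)).card : ℤ)) = quadraticChar (ZMod p) a + 1 := by
        rw [← this]; congr 2; ext x; simp
      have h3 : ((Finset.univ.filter (fun x : ZMod p => x^2 = a)).card : ℂ) = χ a + 1 := by
        have := congrArg (Int.cast : ℤ → ℂ) h2
        push_cast at this
        rw [this]; simp [hχ]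
      rw [h3]; ring
    simp only [e3]
    rw [Finset.sum_add_distrib, hψ0, add_zero]; rfl
  rw [hG, ← hχv m]
  have e4 : ∀ n : ℕ, ((legendreSym p (n:ℤ) : ℤ) : ℂ) * cexp (2 * Real.pi * I * (n * m / p)) =
      χ (n : ZMod p) * ψ.mulShift (m : ZMod p) (n : ZMod p) := by
    intro n
    rw [hχv, AddChar.mulShift_apply]
    have := hψv (m * n)
    push_cast at this
    rw [this]
    congr 2; ring
  simp only [e4]
  rw [sum_range_zmod (fun a => χ a * ψ.mulShift (m : ZMod p) a)]
  change gaussSum χ (ψ.mulShift (m : ZMod p)) = _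
  by_cases hm : (m : ZMod p) = 0
  · rw [hm, AddChar.mulShift_zero]
    have : χ ≠ 1 := by
      intro h
      apply quadraticChar_ne_one hch
      ext a
      have := congrArg (fun f => f (a : ZMod p)) h
      simp only [hχ, MulChar.ringHomComp_apply, MulChar.one_apply_coe, eq_intCast] at this
      rw [MulChar.one_apply_coe]
      exact_mod_cast this
    simp [gaussSum, MulChar.sum_eq_zero_of_ne_one this, MulChar.map_zero]
  · have := gaussSum_mulShift χ ψ (Units.mk0 _ hm)
    rw [Units.val_mk0] at this
    rw [← this, ← mul_assoc]
    have h2 : χ (m : ZMod p) * χ (m : ZMod p) = 1 := by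
      have := quadraticChar_sq_one hm
      simp only [hχ, MulChar.ringHomComp_apply]
      rw [← map_mul, ← sq, this]; simp
    rw [h2, one_mul]

lemma log_im (u : ℝ) (h0 : 0 < u) (h1 : u < 1) :
    1 - cexp (2 * Real.pi * I * u) ∈ slitPlane ∧
    (Complex.log (1 - cexp (2 * Real.pi * I * u))).im = Real.pi * (u - 1/2) := by
  have hsin : 0 < Real.sin (Real.pi * u) := Real.sin_pos_of_pos_of_lt_pi (by positivity) (by nlinarith [Real.pi_pos])
  have e : 1 - cexp (2 * Real.pi * I * u) = ((2 * Real.sin (Real.pi * u) : ℝ) : ℂ) *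
      (Complex.cos ((Real.pi * (u - 1/2) : ℝ):ℂ) + Complex.sin ((Real.pi * (u - 1/2) : ℝ):ℂ) * I) := by
    have a1 : Complex.cos ((Real.pi * (u - 1/2) : ℝ):ℂ) = Complex.sin (Real.pi * u) := by
      rw [← Complex.cos_sub_pi_div_two]; push_cast; congr 1; ring
    have a2 : Complex.sin ((Real.pi * (u - 1/2) : ℝ):ℂ) = - Complex.cos (Real.pi * u) := by
      rw [← Complex.sin_sub_pi_div_two]; push_cast; congr 1; ring
    rw [a1, a2]
    rw [show 2 * Real.pi * I * u = (2 * (Real.pi * u)) * I by ring, Complex.exp_mul_I, Complex.cos_two_mul, Complex.sin_two_mul]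
    push_cast
    have := Complex.sin_sq_add_cos_sq (Real.pi * u)
    linear_combination (-2:ℂ) * this
  constructor
  · rw [Complex.mem_slitPlane_iff]
    left
    rw [e, Complex.re_ofReal_mul, ← Complex.ofReal_cos, ← Complex.ofReal_sin]
    simp only [add_re, ofReal_re, mul_re, I_re, mul_zero, ofReal_im, I_im, mul_one, sub_self, add_zero]
    have : Real.cos (Real.pi * (u - 1/2)) = Real.sin (Real.pi * u) := by
      rw [← Real.cos_sub_pi_div_two]; congr 1; ring
    rw [this]; positivity
  · rw [Complex.log_im, e]
    rw [Complex.arg_mul_cos_add_sin_mul_I (by positivity) ⟨by nlinarith [Real.pi_pos], by nlinarith [Real.pi_pos]⟩]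

lemma geom_bound (z : ℂ) (hz : ‖z‖ = 1) (h1 : z ≠ 1) (N : ℕ) :
    ‖∑ i ∈ Finset.range N, z^(i+1)‖ ≤ 2 / ‖1 - z‖ := by
  have hne : 0 < ‖1 - z‖ := norm_pos_iff.2 (sub_ne_zero.2 h1.symm)
  rw [le_div_iff₀ hne, ← norm_mul]
  have : (∑ i ∈ Finset.range N, z^(i+1)) * (1 - z) = z * (1 - z^N) := by
    rw [← mul_neg_geom_sum z N, Finset.sum_congr rfl (fun i _ => pow_succ z i), ← Finset.sum_mul]; ring
  rw [this, norm_mul, hz, one_mul]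
  refine (norm_sub_le _ _).trans ?_
  rw [norm_pow, hz]; norm_num
lemma log_limit (z : ℂ) (hz : 1 - z ∈ slitPlane) :
    Tendsto (fun r : ℝ => -Complex.log (1 - r * z)) (𝓝[<] 1) (𝓝 (-Complex.log (1 - z))) := by
  have h1 : Tendsto (fun r : ℝ => 1 - (r:ℂ) * z) (𝓝[<] 1) (𝓝 (1 - z)) := by
    have : Continuous (fun r : ℝ => 1 - (r:ℂ) * z) := by fun_prop
    have h := this.tendsto 1
    simp only [ofReal_one, one_mul] at h
    exact h.mono_left nhdsWithin_le_nhds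
  exact (h1.clog hz).neg

lemma key (p : ℕ) [Fact p.Prime] (hp2 : p ≠ 2) (x : ℝ) (hx0 : 0 < x) (hx1 : x < 1)
    (hxn : ∀ n : ℕ, (n:ℝ) / p ≠ x)
    (ω : ℕ → ℝ) (h0 : ω 0 = 0) (h1 : ω 1 = 1) (hmul : ∀ m n, ω (m * n) = ω m * ω n)
    (hval : ∀ n, ω n = 0 ∨ ω n = 1 ∨ ω n = -1) (c : ℝ) (hc : 0 < c)
    (hω : ∀ m : ℕ, ((legendreSym p (m:ℤ) : ℤ) : ℝ) * ((Real.sqrt p * ((1 + (-I)^p) / (1 - I))) *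
      (1 - cexp (-(2 * Real.pi * I * (m * x))))).im = c * ω m) :
    0 < ∑ n ∈ (Finset.range p).filter (fun n : ℕ => 0 < n ∧ (n:ℝ) / p < x), legendreSym p (n:ℤ) := by
  have hp0 : 0 < p := (Fact.out : p.Prime).pos
  have hpR : (0:ℝ) < p := by exact_mod_cast hp0
  have hpC : (p:ℂ) ≠ 0 := by exact_mod_cast hp0.ne'
  set χ : ℕ → ℝ := fun n => ((legendreSym p (n:ℤ) : ℤ) : ℝ) with hχ
  have hχC : ∀ n : ℕ, ((legendreSym p (n:ℤ) : ℤ) : ℂ) = ((χ n : ℝ) : ℂ) := by intro n; simp [hχ]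
  set G : ℂ := Real.sqrt p * ((1 + (-I)^p) / (1 - I)) with hG
  have hχ0 : χ 0 = 0 := by simp [hχ, legendreSym]
  set A := Finset.Ico 1 p with hA
  have hrange : ∀ f : ℕ → ℂ, f 0 = 0 → ∑ n ∈ Finset.range p, f n = ∑ n ∈ A, f n := by
    intro f hf
    rw [Finset.range_eq_Ico, Finset.sum_eq_sum_Ico_succ_bot hp0, hf, zero_add]
  have hLG : ∀ m : ℕ, ∑ n ∈ A, ((χ n : ℝ) : ℂ) * cexp (2 * Real.pi * I * (n * m / p)) = ((χ m : ℝ) : ℂ) * G := by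
    intro m
    have := legendre_gauss p hp2 m
    simp only [hχC] at this
    rw [← this, hrange _ (by rw [hχ0]; simp)]
  set u : ℕ → ℝ := fun n => (n:ℝ)/p - x + (if (n:ℝ)/p < x then 1 else 0) with hu
  set Z : ℕ → ℂ := fun n => cexp (2 * Real.pi * I * (((n:ℝ)/p : ℝ):ℂ)) with hZ
  set Y : ℕ → ℂ := fun n => cexp (2 * Real.pi * I * ((u n:ℝ):ℂ)) with hY
  have hnorm : ∀ v : ℝ, ‖cexp (2 * Real.pi * I * (v:ℂ))‖ = 1 := by
    intro v
    rw [show 2 * Real.pi * I * (v:ℂ) = ((2 * Real.pi * v : ℝ):ℂ) * I by push_cast; ring, Complex.norm_exp_ofReal_mul_I]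
  have hYv : ∀ n, Y n = cexp (2 * Real.pi * I * ((n:ℂ)/p - x)) := by
    intro n
    simp only [hY, hu]
    split_ifs with h
    · rw [Complex.exp_eq_exp_iff_exists_int]
      exact ⟨1, by push_cast; ring⟩
    · push_cast; congr 1; ring
  have hn01 : ∀ n ∈ A, 0 < (n:ℝ)/p ∧ (n:ℝ)/p < 1 := by
    intro n hn
    rw [hA, Finset.mem_Ico] at hn
    have h1 : (0:ℝ) < n := by exact_mod_cast hn.1
    have h2 : (n:ℝ) < p := by exact_mod_cast hn.2
    exact ⟨by positivity, by rwa [div_lt_one hpR]⟩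
  have hu01 : ∀ n ∈ A, 0 < u n ∧ u n < 1 := by
    intro n hn
    have := hn01 n hn
    simp only [hu]
    split_ifs with h
    · constructor <;> linarith
    · have := lt_of_le_of_ne (not_lt.1 h) (hxn n).symm
      constructor <;> linarith
  have hZs := fun n hn => log_im _ (hn01 n hn).1 (hn01 n hn).2
  have hYs := fun n hn => log_im _ (hu01 n hn).1 (hu01 n hn).2
  have hne : ∀ z : ℂ, 1 - z ∈ slitPlane → z ≠ 1 := by
    rintro z hz rfl
    simp at hz
  have hexp : ∀ m : ℕ, (∑ n ∈ A, ((χ n : ℝ) : ℂ) * (Z n ^ m - Y n ^ m)) = ((χ m : ℝ) : ℂ) * (G * (1 - cexp (-(2 * Real.pi * I * (m * x))))) := by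
    intro m
    have e1 : ∀ n, Z n ^ m = cexp (2 * Real.pi * I * (n * m / p)) := by
      intro n; simp only [hZ]; rw [← Complex.exp_nat_mul]; congr 1; push_cast; ring
    have e2 : ∀ n, Y n ^ m = cexp (2 * Real.pi * I * (n * m / p)) * cexp (-(2 * Real.pi * I * (m * x))) := by
      intro n; rw [hYv, ← Complex.exp_nat_mul, ← Complex.exp_add]; congr 1; ring
    rw [← mul_assoc, ← hLG, Finset.sum_mul]
    refine Finset.sum_congr rfl fun n _ => ?_
    rw [e1, e2]; ring
  have hcω : ∀ m : ℕ, c * ω m = (∑ n ∈ A, ((χ n : ℝ) : ℂ) * (Z n ^ m - Y n ^ m)).im := by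
    intro m
    rw [hexp, Complex.im_ofReal_mul, ← hω]
  set C0 : ℝ := ∑ n ∈ A, |χ n| * (2 / ‖1 - Z n‖ + 2 / ‖1 - Y n‖) with hC0
  have hbd : ∀ N, |∑ i ∈ Finset.range N, ω (i+1)| ≤ C0 / c := by
    intro N
    rw [le_div_iff₀ hc, ← abs_of_pos hc, ← abs_mul, Finset.sum_mul]
    have : ∑ i ∈ Finset.range N, ω (i+1) * c = (∑ n ∈ A, ((χ n : ℝ) : ℂ) * (∑ i ∈ Finset.range N, Z n ^ (i+1) - ∑ i ∈ Finset.range N, Y n ^ (i+1))).im := by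
      simp only [mul_comm _ c, hcω]
      rw [← Complex.im_sum, Finset.sum_comm]
      congr 1
      refine Finset.sum_congr rfl fun n _ => ?_
      rw [← Finset.mul_sum, Finset.sum_sub_distrib]
    rw [this]
    refine (Complex.abs_im_le_norm _).trans ((norm_sum_le _ _).trans ?_)
    refine Finset.sum_le_sum fun n hn => ?_
    rw [norm_mul, Complex.norm_real, Real.norm_eq_abs]
    refine mul_le_mul_of_nonneg_left ?_ (abs_nonneg _)
    refine (norm_sub_le _ _).trans ?_
    exact add_le_add (geom_bound _ (hnorm _) (hne _ (hZs n hn).1) N) (geom_bound _ (hnorm _) (hne _ (hYs n hn).1) N)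
  obtain ⟨L, hLpos, hL⟩ := L_pos ω h0 h1 hmul hval _ hbd
  have hL2 : Tendsto (fun N => ∑ i ∈ Finset.range N, ω i / (i:ℝ)) atTop (𝓝 L) := by
    rw [← tendsto_add_atTop_iff_nat 1]
    refine hL.congr fun N => ?_
    rw [Finset.sum_range_succ' _ N]
    simp [h0]
  have hAbel := (Real.tendsto_tsum_powerSeries_nhdsWithin_lt hL2).const_mul c
  have hlim : Tendsto (fun r : ℝ => (∑ n ∈ A, ((χ n : ℝ) : ℂ) * (-Complex.log (1 - r * Z n) - -Complex.log (1 - r * Y n))).im)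
      (𝓝[<] 1) (𝓝 (∑ n ∈ A, ((χ n : ℝ) : ℂ) * (-Complex.log (1 - Z n) - -Complex.log (1 - Y n))).im) := by
    refine (Complex.continuous_im.tendsto _).comp ?_
    refine tendsto_finsetSum _ fun n hn => ?_
    exact ((log_limit _ (hZs n hn).1).sub (log_limit _ (hYs n hn).1)).const_mul _
  have heq := tendsto_nhds_unique_of_eventuallyEq hAbel hlim ?_
  · have hval2 : (∑ n ∈ A, ((χ n : ℝ) : ℂ) * (-Complex.log (1 - Z n) - -Complex.log (1 - Y n))).im =
        Real.pi * ∑ n ∈ A, (if (n:ℝ)/p < x then χ n else 0) - Real.pi * x * ∑ n ∈ A, χ n := by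
      rw [Complex.im_sum, Finset.mul_sum, Finset.mul_sum, ← Finset.sum_sub_distrib]
      refine Finset.sum_congr rfl fun n hn => ?_
      rw [Complex.im_ofReal_mul, Complex.sub_im, Complex.neg_im, Complex.neg_im, (hZs n hn).2, (hYs n hn).2]
      simp only [hu]
      split_ifs <;> ring
    have hsum0 : ∑ n ∈ A, χ n = 0 := by
      have := hLG 0
      rw [hχ0] at this
      simp only [Nat.cast_zero, mul_zero, zero_div, Complex.exp_zero, mul_one, ofReal_zero, zero_mul] at this
      exact_mod_cast this
    rw [hval2, hsum0, mul_zero, sub_zero] at heq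
    have hpos : 0 < ∑ n ∈ A, (if (n:ℝ)/p < x then χ n else 0) := by
      have : 0 < c * L := by positivity
      rw [heq] at this
      exact pos_of_mul_pos_right this Real.pi_pos.le
    rw [← Finset.sum_filter] at hpos
    have hset : A.filter (fun n : ℕ => (n:ℝ)/p < x) = (Finset.range p).filter (fun n : ℕ => 0 < n ∧ (n:ℝ) / p < x) := by
      ext n
      simp only [hA, Finset.mem_filter, Finset.mem_Ico, Finset.mem_range]
      constructor
      · rintro ⟨⟨a, b⟩, d⟩; exact ⟨b, a, d⟩
      · rintro ⟨b, a, d⟩; exact ⟨⟨a, b⟩, d⟩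
    rw [hset] at hpos
    simp only [hχ] at hpos
    exact_mod_cast hpos
  · have ev2 : ∀ᶠ t : ℝ in 𝓝[<] 1, t ∈ Set.Ioo (0:ℝ) 1 := Ioo_mem_nhdsLT one_pos
    filter_upwards [ev2] with r hr
    have hlt : ∀ v : ℝ, ‖(r:ℂ) * cexp (2 * Real.pi * I * (v:ℂ))‖ < 1 := by
      intro v
      rw [norm_mul, hnorm, mul_one, Complex.norm_real, Real.norm_eq_abs, abs_of_pos hr.1]; exact hr.2
    have hs : HasSum (fun m : ℕ => ∑ n ∈ A, ((χ n : ℝ) : ℂ) * ((r * Z n)^m / m - (r * Y n)^m / m))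
        (∑ n ∈ A, ((χ n : ℝ) : ℂ) * (-Complex.log (1 - r * Z n) - -Complex.log (1 - r * Y n))) := by
      refine hasSum_sum fun n _ => ?_
      exact ((Complex.hasSum_taylorSeries_neg_log (hlt _)).sub (Complex.hasSum_taylorSeries_neg_log (hlt _))).mul_left _
    rw [← tsum_mul_left]
    have hs2 := Complex.hasSum_im hs
    rw [← hs2.tsum_eq]
    refine tsum_congr fun m => ?_
    have : ∑ n ∈ A, ((χ n : ℝ) : ℂ) * ((r * Z n)^m / m - (r * Y n)^m / m) =
       ((r^m/m : ℝ) : ℂ) * ∑ n ∈ A, ((χ n : ℝ) : ℂ) * (Z n ^ m - Y n ^ m) := by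
      rw [Finset.mul_sum]
      refine Finset.sum_congr rfl fun n _ => ?_
      push_cast
      rw [mul_pow, mul_pow]; ring
    rw [this, Complex.im_ofReal_mul, ← hcω]
    ring
lemma key2 (p : ℕ) [Fact p.Prime] (hp2 : p ≠ 2) (q : ℕ) (hq : 1 < q) (hqp : ¬ q ∣ p)
    (κ : ℕ → ℝ) (h1 : κ 1 = 1) (hmul : ∀ m n, κ (m * n) = κ m * κ n)
    (hval : ∀ n, κ n = 0 ∨ κ n = 1 ∨ κ n = -1) (c : ℝ) (hc : 0 < c)
    (hκ : ∀ m : ℕ, ((Real.sqrt p * ((1 + (-I)^p) / (1 - I))) *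
      (1 - cexp (-(2 * Real.pi * I * (m * ((1 / q : ℝ):ℂ)))))).im = c * κ m) :
    0 < ∑ n ∈ (Finset.range p).filter (fun n : ℕ => 0 < n ∧ (n:ℚ) < (p:ℚ) / (q:ℚ)), legendreSym p (n:ℤ) := by
  have hp0 : 0 < p := (Fact.out : p.Prime).pos
  have hpR : (0:ℝ) < p := by exact_mod_cast hp0
  have hq0 : (0:ℝ) < q := by exact_mod_cast (by omega : 0 < q)
  have hqQ : (0:ℚ) < q := by exact_mod_cast (by omega : 0 < q)
  have := key p hp2 (1/q) (by positivity) (by rw [div_lt_one hq0]; exact_mod_cast hq) ?_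
    (fun n => ((legendreSym p (n:ℤ) : ℤ) : ℝ) * κ n) ?_ ?_ ?_ ?_ c hc ?_
  · convert this using 2
    apply Finset.filter_congr
    intro n _
    rw [lt_div_iff₀ hqQ, div_lt_div_iff₀ hpR hq0, one_mul]
    norm_cast
  · intro n h
    apply hqp
    rw [div_eq_div_iff hpR.ne' hq0.ne', one_mul] at h
    exact ⟨n, by rw [mul_comm]; exact_mod_cast h.symm⟩
  · simp [legendreSym]
  · simp [h1, legendreSym]
  · intro m n
    simp only [Nat.cast_mul, legendreSym.mul, hmul, Int.cast_mul]; ring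
  · intro n
    have h3 : legendreSym p (n:ℤ) = 0 ∨ legendreSym p (n:ℤ) = 1 ∨ legendreSym p (n:ℤ) = -1 :=
      quadraticChar_isQuadratic (ZMod p) _
    rcases h3 with h | h | h <;> rcases hval n with h' | h' | h' <;> simp [h, h']
  · intro m
    rw [hκ]; ring

lemma negI_pow (p : ℕ) : (-I)^p = (-I)^(p % 4) := by
  conv_lhs => rw [← Nat.div_add_mod p 4, pow_add, pow_mul]
  have : (-I)^4 = 1 := by rw [neg_pow, I_pow_four]; norm_num
  rw [this, one_pow, one_mul]

lemma im_one (p : ℕ) (hp : p % 4 = 1) (m : ℕ) (x : ℝ) :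
    ((Real.sqrt p * ((1 + (-I)^p) / (1 - I))) * (1 - cexp (-(2 * Real.pi * I * (m * (x:ℂ)))))).im =
      Real.sqrt p * Real.sin (2 * Real.pi * (m * x)) := by
  have hI : (1 - I : ℂ) ≠ 0 := by
    intro h; have := congrArg Complex.re h; simp at this
  rw [negI_pow, hp, pow_one, ← sub_eq_add_neg, div_self hI, mul_one, Complex.im_ofReal_mul]
  rw [show -(2 * Real.pi * I * (m * (x:ℂ))) = ((-(2 * Real.pi * (m * x)) : ℝ) : ℂ) * I by push_cast; ring,
    Complex.sub_im, Complex.exp_ofReal_mul_I_im, Real.sin_neg]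
  simp

lemma im_three (p : ℕ) (hp : p % 4 = 3) (m : ℕ) (x : ℝ) :
    ((Real.sqrt p * ((1 + (-I)^p) / (1 - I))) * (1 - cexp (-(2 * Real.pi * I * (m * (x:ℂ)))))).im =
      Real.sqrt p * (1 - Real.cos (2 * Real.pi * (m * x))) := by
  have hI : (1 - I : ℂ) ≠ 0 := by
    intro h; have := congrArg Complex.re h; simp at this
  have h3 : (1 + (-I)^3) / (1 - I) = I := by
    rw [div_eq_iff hI]; linear_combination (1 - I) * I_sq
  rw [negI_pow, hp, h3, mul_assoc, Complex.im_ofReal_mul]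
  rw [show -(2 * Real.pi * I * (m * (x:ℂ))) = ((-(2 * Real.pi * (m * x)) : ℝ) : ℂ) * I by push_cast; ring,
    Complex.I_mul_im, Complex.sub_re, Complex.exp_ofReal_mul_I_re, Real.cos_neg]
  simp

lemma angle_mod (q m : ℕ) (hq : 0 < q) :
    2 * Real.pi * (m * (1 / (q:ℝ))) = 2 * Real.pi * ((m % q : ℕ) / q) + (m / q : ℕ) * (2 * Real.pi) := by
  have : (m:ℝ) = q * (m / q : ℕ) + (m % q : ℕ) := by exact_mod_cast (Nat.div_add_mod m q).symm
  have hq' : (q:ℝ) ≠ 0 := by exact_mod_cast hq.ne'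
  conv_lhs => rw [this]
  field_simp
  ring

lemma cos_two_thirds : Real.cos (2 * Real.pi / 3) = -1/2 := by
  rw [show 2 * Real.pi / 3 = Real.pi - Real.pi / 3 by ring, Real.cos_pi_sub, Real.cos_pi_div_three]; norm_num
lemma sin_two_thirds : Real.sin (2 * Real.pi / 3) = Real.sqrt 3 / 2 := by
  rw [show 2 * Real.pi / 3 = Real.pi - Real.pi / 3 by ring, Real.sin_pi_sub, Real.sin_pi_div_three]
lemma cos_four_thirds : Real.cos (4 * Real.pi / 3) = -1/2 := by
  rw [show 4 * Real.pi / 3 = Real.pi / 3 + Real.pi by ring, Real.cos_add_pi, Real.cos_pi_div_three]; norm_num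
lemma sin_four_thirds : Real.sin (4 * Real.pi / 3) = -(Real.sqrt 3 / 2) := by
  rw [show 4 * Real.pi / 3 = Real.pi / 3 + Real.pi by ring, Real.sin_add_pi, Real.sin_pi_div_three]

lemma case_half (p : ℕ) [Fact p.Prime] (hp2 : p ≠ 2) (hp : p % 4 = 3) :
    0 < ∑ n ∈ (Finset.range p).filter (fun n : ℕ => 0 < n ∧ (n:ℚ) < (p:ℚ) / ((2:ℕ):ℚ)), legendreSym p (n:ℤ) := by
  have hpR : (0:ℝ) < p := by exact_mod_cast (Fact.out : p.Prime).pos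
  refine key2 p hp2 2 (by norm_num) (by omega) (fun m => if m % 2 = 1 then 1 else 0) (by norm_num) ?_ ?_
    (Real.sqrt p * 2) (by positivity) ?_
  · intro m n
    simp only [Nat.mul_mod m n]
    rcases Nat.mod_two_eq_zero_or_one m with h | h <;> rcases Nat.mod_two_eq_zero_or_one n with h' | h' <;> simp [h, h']
  · intro n
    split_ifs <;> simp
  · intro m
    rw [im_three p hp, angle_mod 2 m (by norm_num), Real.cos_add_nat_mul_two_pi]
    rcases Nat.mod_two_eq_zero_or_one m with h | h
    · simp [h]
    · rw [h]
      rw [show 2 * Real.pi * (((1:ℕ):ℝ) / ((2:ℕ):ℝ)) = Real.pi by push_cast; ring, Real.cos_pi]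
      norm_num

lemma case_quarter (p : ℕ) [Fact p.Prime] (hp2 : p ≠ 2) (hp : p % 4 = 1) :
    0 < ∑ n ∈ (Finset.range p).filter (fun n : ℕ => 0 < n ∧ (n:ℚ) < (p:ℚ) / ((4:ℕ):ℚ)), legendreSym p (n:ℤ) := by
  have hpR : (0:ℝ) < p := by exact_mod_cast (Fact.out : p.Prime).pos
  have hmod : ∀ m : ℕ, m % 4 = 0 ∨ m % 4 = 1 ∨ m % 4 = 2 ∨ m % 4 = 3 := by intro m; omega
  refine key2 p hp2 4 (by norm_num) (by omega) (fun m => if m % 4 = 1 then 1 else if m % 4 = 3 then -1 else 0) (by norm_num) ?_ ?_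
    (Real.sqrt p) (by positivity) ?_
  · intro m n
    simp only [Nat.mul_mod m n]
    rcases hmod m with h | h | h | h <;> rcases hmod n with h' | h' | h' | h' <;> simp [h, h']
  · intro n
    split_ifs <;> simp
  · intro m
    rw [im_one p hp, angle_mod 4 m (by norm_num), Real.sin_add_nat_mul_two_pi]
    rcases hmod m with h | h | h | h
    · simp [h]
    · rw [h, show 2 * Real.pi * (((1:ℕ):ℝ) / ((4:ℕ):ℝ)) = Real.pi / 2 by push_cast; ring, Real.sin_pi_div_two]
      norm_num
    · rw [h, show 2 * Real.pi * (((2:ℕ):ℝ) / ((4:ℕ):ℝ)) = Real.pi by push_cast; ring, Real.sin_pi]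
      norm_num
    · rw [h, show 2 * Real.pi * (((3:ℕ):ℝ) / ((4:ℕ):ℝ)) = Real.pi / 2 + Real.pi by push_cast; ring, Real.sin_add_pi, Real.sin_pi_div_two]
      norm_num

lemma case_third (p : ℕ) [Fact p.Prime] (hp2 : p ≠ 2) (hp3 : 3 < p) :
    0 < ∑ n ∈ (Finset.range p).filter (fun n : ℕ => 0 < n ∧ (n:ℚ) < (p:ℚ) / ((3:ℕ):ℚ)), legendreSym p (n:ℤ) := by
  have hpp : p.Prime := Fact.out
  have hpR : (0:ℝ) < p := by exact_mod_cast hpp.pos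
  have hmod : ∀ m : ℕ, m % 3 = 0 ∨ m % 3 = 1 ∨ m % 3 = 2 := by intro m; omega
  have h3p : ¬ 3 ∣ p := by
    intro h
    have := (Nat.prime_dvd_prime_iff_eq Nat.prime_three hpp).1 h
    omega
  have hodd := hpp.eq_two_or_odd.resolve_left hp2
  have hs3 : (0:ℝ) < Real.sqrt 3 := by positivity
  have ang1 : 2 * Real.pi * (((1:ℕ):ℝ) / ((3:ℕ):ℝ)) = 2 * Real.pi / 3 := by push_cast; ring
  have ang2 : 2 * Real.pi * (((2:ℕ):ℝ) / ((3:ℕ):ℝ)) = 4 * Real.pi / 3 := by push_cast; ring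
  rcases (by omega : p % 4 = 1 ∨ p % 4 = 3) with hp | hp
  · refine key2 p hp2 3 (by norm_num) h3p (fun m => if m % 3 = 1 then 1 else if m % 3 = 2 then -1 else 0) (by norm_num) ?_ ?_
      (Real.sqrt p * (Real.sqrt 3 / 2)) (by positivity) ?_
    · intro m n
      simp only [Nat.mul_mod m n]
      rcases hmod m with h | h | h <;> rcases hmod n with h' | h' | h' <;> simp [h, h']
    · intro n
      split_ifs <;> simp
    · intro m
      rw [im_one p hp, angle_mod 3 m (by norm_num), Real.sin_add_nat_mul_two_pi]
      rcases hmod m with h | h | h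
      · simp [h]
      · rw [h, ang1, sin_two_thirds]; norm_num
      · rw [h, ang2, sin_four_thirds]; norm_num
  · refine key2 p hp2 3 (by norm_num) h3p (fun m => if m % 3 = 0 then 0 else 1) (by norm_num) ?_ ?_
      (Real.sqrt p * (3 / 2)) (by positivity) ?_
    · intro m n
      simp only [Nat.mul_mod m n]
      rcases hmod m with h | h | h <;> rcases hmod n with h' | h' | h' <;> simp [h, h']
    · intro n
      split_ifs <;> simp
    · intro m
      rw [im_three p hp, angle_mod 3 m (by norm_num), Real.cos_add_nat_mul_two_pi]
      rcases hmod m with h | h | h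
      · simp [h]
      · rw [h, ang1, cos_two_thirds]; norm_num
      · rw [h, ang2, cos_four_thirds]; norm_num

/-- Theorem 7.1 (Dirichlet): for an odd prime `p`:
(i) if `p ≡ 3 mod 4` then `∑_{0<n<p/2} χ_p(n) > 0`;
(ii) if `p ≡ 1 mod 4` then `∑_{0<n<p/4} χ_p(n) > 0`;
(iii) if `p > 3` then `∑_{0<n<p/3} χ_p(n) > 0`. -/
theorem quadratic_excess_pos (p : ℕ) [Fact p.Prime] (hp2 : p ≠ 2) :
    (p % 4 = 3 →
      0 < ∑ n ∈ (Finset.range p).filter (fun n : ℕ => 0 < n ∧ (n : ℚ) < (p : ℚ) / 2),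
        legendreSym p (n : ℤ)) ∧
    (p % 4 = 1 →
      0 < ∑ n ∈ (Finset.range p).filter (fun n : ℕ => 0 < n ∧ (n : ℚ) < (p : ℚ) / 4),
        legendreSym p (n : ℤ)) ∧
    (3 < p →
      0 < ∑ n ∈ (Finset.range p).filter (fun n : ℕ => 0 < n ∧ (n : ℚ) < (p : ℚ) / 3),
        legendreSym p (n : ℤ)) := by
  refine ⟨fun h => ?_, fun h => ?_, fun h => ?_⟩
  · exact_mod_cast case_half p hp2 h
  · exact_mod_cast case_quarter p hp2 h
  · exact_mod_cast case_third p hp2 h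
end
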